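/- Let K be an algebraically closed field of characteristic 0, let f and g be nonconstant, relatively prime polynomials in K[t], set A = f² − g², B = 2fg, C = f² + g², and let w ∈ K[t] be a nonconstant polynomial. If (x, y, z) is a solution in positive integers of (wA)^x + (wB)^y = (wC)^z, then x = y = z. -/

import Mathlib

open Polynomial

/-!
A Pythagorean triple is a point with coprime coordinates on a diagonal conic
`αX² + βY² + γZ² = 0`, a notion symmetric in the three coordinates `P`, `Q`, `R`. After moving
signs and naming the coordinates by increasing exponents, dividing the equation by the least power
of `w` leaves `aPˣ + bwᵐQˣ⁺ᵐ + cwᵐ⁺ⁿRˣ⁺ᵐ⁺ⁿ = 0`.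

If `m = 0 < n`, then `Rˣ⁺ⁿ` divides `aPˣ + bQˣ`. Since `P²` is a constant multiple of `Q²` modulo
`R²`, a first-order expansion shows that `R³` never divides this form. For `x = n = 1`, its norm is
a constant multiple of `R²`, leaving no room for the factor `w`.

If `m > 0`, then `Pˣ = wᵐE`, and Mason–Stothers applied to `aE + bQˣ⁺ᵐ + cwⁿRˣ⁺ᵐ⁺ⁿ = 0` forces
`x = m = 1`. For `n = 0`, eliminating `Q` gives a quadratic relation between `P` and `R` which is
impossible. For `n > 0` the degree bounds make `deg R < deg P`, so `P² - κQ² = ρR²` splits over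
`K` as `(P - iQ)(P + iQ)`, and comparing degrees of these factors excludes `R³ ∣ aE + bQ²`.
-/

section GeneralLemmas

variable {K : Type*} [Field K]

lemma derivative_eq_zero_of_derivative_sq_add_sq_eq_zero [NeZero (2 : K)] {P Q : K[X]} {a b : K}
    (ha : a ≠ 0) (hb : b ≠ 0) (hPQ : IsCoprime P Q)
    (h : derivative (C a * P ^ 2 + C b * Q ^ 2) = 0) : derivative P = 0 := by
  have hder : C a * (P * derivative P) + C b * (Q * derivative Q) = 0 := by
    apply mul_left_cancel₀ (C_ne_zero.2 (two_ne_zero (α := K)))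
    simp only [derivative_add, derivative_C_mul, derivative_sq] at h
    linear_combination h
  have hP_dvd : P ∣ derivative Q := hPQ.dvd_of_dvd_mul_left <|
    (dvd_C_mul hb).1 ⟨-(C a * derivative P), by linear_combination hder⟩
  have hQ_dvd : Q ∣ derivative P := hPQ.symm.dvd_of_dvd_mul_left <|
    (dvd_C_mul ha).1 ⟨-(C b * derivative Q), by linear_combination hder⟩
  by_contra hP'
  have hP : P.natDegree ≠ 0 := mt derivative_of_natDegree_zero hP'
  have hQ' : derivative Q ≠ 0 := by
    intro hQ'
    have hP0 : P ≠ 0 := by rintro rfl; exact hP natDegree_zero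
    simp [hQ', ha, hP0, hP'] at hder
  have hQ : Q.natDegree ≠ 0 := mt derivative_of_natDegree_zero hQ'
  have := natDegree_le_of_dvd hP_dvd hQ'
  have := natDegree_le_of_dvd hQ_dvd hP'
  have := natDegree_derivative_lt hP
  have := natDegree_derivative_lt hQ
  omega

lemma isCoprime_of_conic_eq {P Q R : K[X]} {α β γ : K} (hα : α ≠ 0)
    (hconic : C α * P ^ 2 + C β * Q ^ 2 + C γ * R ^ 2 = 0) (hPQ : IsCoprime P Q) :
    IsCoprime Q R := by
  have hQP : IsCoprime Q (C α * P ^ 2) :=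
    (isCoprime_mul_unit_left_right (isUnit_C.2 hα.isUnit) _ _).2 hPQ.symm.pow_right
  have hneg : C γ * R ^ 2 = -(C α * P ^ 2 + Q * (C β * Q)) := by linear_combination hconic
  have hQR : IsCoprime Q (C γ * R ^ 2) := hneg ▸ (hQP.add_mul_left_right _).neg_right
  exact hQR.of_isCoprime_of_dvd_right ((dvd_pow_self R two_ne_zero).mul_left _)

lemma natDegree_lt_of_mul_mul_dvd_pow [CharZero K] {u v s N : K[X]} {k : ℕ} (hN : N ≠ 0)
    (huv : IsCoprime u v) (hsum : u + v + s = 0) (hv : v.natDegree ≠ 0)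
    (hdvd : u * v * s ∣ N ^ k) : v.natDegree < N.natDegree ∧ s.natDegree < N.natDegree := by
  classical
  have huvs : u * v * s ≠ 0 := ne_zero_of_dvd_ne_zero (pow_ne_zero k hN) hdvd
  have hrad : (UniqueFactorizationMonoid.radical (u * v * s)).natDegree ≤ N.natDegree :=
    natDegree_le_of_dvd
      ((UniqueFactorizationMonoid.exists_dvd_pow_iff_radical_dvd huvs).1 ⟨k, hdvd⟩) hN
  have huv0 := left_ne_zero_of_mul huvs
  rcases Polynomial.abc (left_ne_zero_of_mul huv0) (right_ne_zero_of_mul huv0)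
    (right_ne_zero_of_mul huvs) huv hsum with ⟨-, hvr, hsr⟩ | ⟨-, hv', -⟩
  · exact ⟨hvr.trans hrad, hsr.trans hrad⟩
  · exact absurd (derivative_eq_zero.1 hv') hv

section Conic

variable {P Q R : K[X]} {κ ρ a b : K}

lemma sq_mul_pow_eq_sq_of_dvd {x : ℕ} (hconic : P ^ 2 = C κ * Q ^ 2 + C ρ * R ^ 2)
    (hQR : IsCoprime Q R) (hunit : ¬IsUnit R) (hdvd : R ∣ C a * P ^ x + C b * Q ^ x) :
    a ^ 2 * κ ^ x = b ^ 2 := by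
  have hpow : R ∣ (P ^ 2) ^ x - (C κ * Q ^ 2) ^ x :=
    Dvd.dvd.trans ⟨C ρ * R, by rw [hconic]; ring⟩ (sub_dvd_pow_sub_pow _ _ x)
  have hdiff : R ∣ C (a ^ 2 * κ ^ x - b ^ 2) * Q ^ (2 * x) := by
    convert dvd_sub (hdvd.mul_right (C a * P ^ x - C b * Q ^ x)) (hpow.mul_left (C (a ^ 2)))
      using 1
    simp only [C_sub, C_mul, C_pow]
    ring
  by_contra hne
  have hRQ := (dvd_C_mul (sub_ne_zero.2 hne)).1 hdiff
  exact hunit (hQR.symm.pow_right.isUnit_of_dvd hRQ)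

lemma isUnit_of_sq_mul_dvd_add {w : K[X]} (hconic : P ^ 2 = C κ * Q ^ 2 + C ρ * R ^ 2)
    (hρ : ρ ≠ 0) (hQR : IsCoprime Q R) (hR : 0 < R.natDegree) (ha : a ≠ 0)
    (hdvd : R ^ 2 * w ∣ C a * P + C b * Q) : IsUnit w := by
  have hab : a ^ 2 * κ ^ 1 = b ^ 2 := by
    refine sq_mul_pow_eq_sq_of_dvd hconic hQR (not_isUnit_of_natDegree_pos R hR) ?_
    simpa using (dvd_pow_self R two_ne_zero).trans (dvd_of_mul_right_dvd hdvd)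
  have hnorm : (C a * P + C b * Q) * (C a * P - C b * Q) = R ^ 2 * C (a ^ 2 * ρ) := by
    have hab_C := congrArg C hab
    simp only [C_mul, C_pow] at hab_C ⊢
    linear_combination C a ^ 2 * hconic + Q ^ 2 * hab_C
  have hR0 := ne_zero_of_natDegree_gt hR
  have hw : w ∣ C (a ^ 2 * ρ) :=
    (mul_dvd_mul_iff_left (pow_ne_zero 2 hR0)).1 (hnorm ▸ hdvd.mul_right _)
  exact isUnit_of_dvd_unit hw (isUnit_C.2 (mul_ne_zero (pow_ne_zero 2 ha) hρ).isUnit)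

lemma not_cube_dvd_pow_add_pow {x : ℕ} (hconic : P ^ 2 = C κ * Q ^ 2 + C ρ * R ^ 2)
    (hκ : κ ≠ 0) (hρ : ρ ≠ 0) (hQR : IsCoprime Q R) (hR : 0 < R.natDegree) (ha : a ≠ 0)
    (hx : (x : K) ≠ 0) : ¬R ^ 3 ∣ C a * P ^ x + C b * Q ^ x := by
  intro hdvd
  have hab : a ^ 2 * κ ^ x = b ^ 2 :=
    sq_mul_pow_eq_sq_of_dvd hconic hQR (not_isUnit_of_natDegree_pos R hR)
      ((dvd_pow_self R three_ne_zero).trans hdvd)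
  have hnorm : (C a * P ^ x + C b * Q ^ x) * (C a * P ^ x - C b * Q ^ x) =
      C (a ^ 2) * ((P ^ 2) ^ x - (C κ * Q ^ 2) ^ x) := by
    have hab_C := congrArg C hab
    simp only [C_mul, C_pow] at hab_C ⊢
    linear_combination Q ^ (2 * x) * hab_C
  -- First-order expansion of `(κQ² + ρR²)ˣ`, whose remainder is divisible by `R⁴`.
  have hbinom := sq_dvd_add_pow_sub_sub (C ρ * R ^ 2) (C κ * Q ^ 2) x
  have hlinear : R ^ 2 * R ∣ R ^ 2 * (C (a ^ 2 * κ ^ (x - 1) * ρ * x) * Q ^ (2 * (x - 1))) := by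
    have hR4 : R ^ 3 ∣ (C ρ * R ^ 2) ^ 2 := ⟨C ρ ^ 2 * R, by ring⟩
    convert dvd_sub (hnorm ▸ hdvd.mul_right (C a * P ^ x - C b * Q ^ x))
      ((hR4.trans hbinom).mul_left (C (a ^ 2))) using 1
    · ring
    · rw [hconic]
      simp only [C_mul, C_pow, map_natCast]
      ring
  have hcoeff : a ^ 2 * κ ^ (x - 1) * ρ * x ≠ 0 := by positivity
  have hR0 := ne_zero_of_natDegree_gt hR
  have hRQ := (dvd_C_mul hcoeff).1 ((mul_dvd_mul_iff_left (pow_ne_zero 2 hR0)).1 hlinear)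
  exact not_isUnit_of_natDegree_pos R hR (hQR.symm.pow_right.isUnit_of_dvd hRQ)

end Conic

lemma natDegree_eq_of_natDegree_sq_sub_lt {P Q : K[X]} {κ : K}
    (h : (P ^ 2 - C κ * Q ^ 2).natDegree < (P ^ 2).natDegree) : Q.natDegree = P.natDegree := by
  have hκ : κ ≠ 0 := by rintro rfl; simp at h
  simpa [natDegree_C_mul hκ] using natDegree_sub_eq_left_of_natDegree_lt h

lemma exists_sq_eq_and_natDegree_add_C_mul_eq [NeZero (2 : K)] {P Q : K[X]} {κ : K}
    (h : (P ^ 2 - C κ * Q ^ 2).natDegree < (P ^ 2).natDegree) :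
    ∃ i : K, i ^ 2 = κ ∧ (P + C i * Q).natDegree = P.natDegree := by
  have hdeg : Q.natDegree = P.natDegree := natDegree_eq_of_natDegree_sq_sub_lt h
  have hlead : κ * Q.leadingCoeff ^ 2 = P.leadingCoeff ^ 2 := by
    simpa using leadingCoeff_sub_of_degree_lt (degree_lt_degree h)
  have hP : P.leadingCoeff ≠ 0 := leadingCoeff_ne_zero.2 <| by rintro rfl; simp at h
  have hQ : Q.leadingCoeff ≠ 0 := by
    intro hQ
    rw [hQ, zero_pow two_ne_zero, mul_zero] at hlead
    exact pow_ne_zero 2 hP hlead.symm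
  refine ⟨P.leadingCoeff / Q.leadingCoeff, ?_, ?_⟩
  · rw [div_pow, ← hlead, mul_div_cancel_right₀ _ (pow_ne_zero 2 hQ)]
  · refine natDegree_eq_of_le_of_coeff_ne_zero
      (natDegree_add_le_of_degree_le le_rfl ((natDegree_C_mul_le _ _).trans hdeg.le)) ?_
    rw [coeff_add, coeff_C_mul, ← hdeg, coeff_natDegree, hdeg, coeff_natDegree,
      div_mul_cancel₀ _ hQ, ← two_mul]
    exact mul_ne_zero two_ne_zero hP

lemma eq_zero_of_cube_dvd_sq_sub_sq_add [NeZero (2 : K)] {p q e : K[X]}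
    (hq : 2 * q.natDegree < p.natDegree) (he : e.natDegree < p.natDegree)
    (hdvd : p ^ 3 ∣ ((p - q) ^ 2 + e) ^ 2) : q = 0 := by
  have hp0 : p ≠ 0 := ne_zero_of_natDegree_gt he
  have hbase : p ∣ (p - q) ^ 2 + e := (UniqueFactorizationMonoid.pow_dvd_pow_iff_dvd
    two_ne_zero).1 ((pow_dvd_pow p (by norm_num : 2 ≤ 3)).trans hdvd)
  have hqe : q ^ 2 + e = 0 := by
    refine eq_zero_of_dvd_of_natDegree_lt (p := p) ?_ ?_
    · convert dvd_sub hbase (dvd_mul_right p (p - 2 * q)) using 1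
      ring
    · exact (natDegree_add_le _ _).trans_lt (max_lt (by rwa [natDegree_pow]) he)
  have hsq : p ∣ (p - 2 * q) ^ 2 := by
    refine (mul_dvd_mul_iff_left (pow_ne_zero 2 hp0)).1 ?_
    convert hdvd using 1
    · ring
    · linear_combination (-(p - q) ^ 2 - e - p * (p - 2 * q)) * hqe
  have hpq : p ∣ C (2 ^ 2) * q ^ 2 := by
    convert dvd_sub hsq (dvd_mul_right p (p - 4 * q)) using 1
    simp only [C_pow, C_ofNat]
    ring
  have hq2 : q ^ 2 = 0 := eq_zero_of_dvd_of_natDegree_lt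
    ((dvd_C_mul (pow_ne_zero 2 two_ne_zero)).1 hpq) (by rwa [natDegree_pow])
  exact pow_eq_zero_iff two_ne_zero |>.1 hq2

lemma two_mul_natDegree_lt_of_mul_eq_C_mul_sq {p q R : K[X]} {ρ : K} (hρ : ρ ≠ 0) (hR : R ≠ 0)
    (hpq : p * q = C ρ * R ^ 2) (hp : 0 < p.natDegree)
    (hle : 3 * R.natDegree ≤ 2 * p.natDegree) : 2 * q.natDegree < p.natDegree := by
  have hpq0 : p * q ≠ 0 := hpq ▸ mul_ne_zero (C_ne_zero.2 hρ) (pow_ne_zero 2 hR)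
  have hdeg := congrArg natDegree hpq
  rw [natDegree_mul (left_ne_zero_of_mul hpq0) (right_ne_zero_of_mul hpq0),
    natDegree_C_mul hρ, natDegree_pow] at hdeg
  omega

lemma not_cube_dvd_add_sq [NeZero (2 : K)] {P Q R E : K[X]} {κ ρ : K}
    (hconic : P ^ 2 = C κ * Q ^ 2 + C ρ * R ^ 2) (hρ : ρ ≠ 0)
    (hR : R.natDegree < P.natDegree) (hE : E.natDegree < P.natDegree) :
    ¬R ^ 3 ∣ E + Q ^ 2 := by
  intro hdvd
  have hlt : (P ^ 2 - C κ * Q ^ 2).natDegree < (P ^ 2).natDegree := by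
    rw [sub_eq_of_eq_add' hconic, natDegree_C_mul hρ, natDegree_pow, natDegree_pow]
    omega
  have hQ : Q.natDegree = P.natDegree := natDegree_eq_of_natDegree_sq_sub_lt hlt
  obtain ⟨i, rfl, hp⟩ := exists_sq_eq_and_natDegree_add_C_mul_eq hlt
  set p := P + C i * Q with hp_def
  set q := P - C i * Q with hq_def
  have hpq : p * q = C ρ * R ^ 2 := by
    rw [C_pow] at hconic
    linear_combination hconic
  have hsum : (E + Q ^ 2).natDegree = 2 * P.natDegree := by
    rw [natDegree_add_eq_right_of_natDegree_lt] <;> rw [natDegree_pow] <;> omega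
  have hsum0 : E + Q ^ 2 ≠ 0 := ne_zero_of_natDegree_gt (n := 0) (by omega)
  have hR0 : R ≠ 0 := by
    rintro rfl
    exact hsum0 (by simpa using hdvd)
  have hq : 2 * q.natDegree < p.natDegree := by
    have hR3 := natDegree_le_of_dvd hdvd hsum0
    rw [natDegree_pow] at hR3
    exact two_mul_natDegree_lt_of_mul_eq_C_mul_sq hρ hR0 hpq (by omega) (by omega)
  have hcube : p ^ 3 ∣ ((p - q) ^ 2 + C (4 * i ^ 2) * E) ^ 2 := by
    have hpR : p ∣ R ^ 2 := (dvd_C_mul hρ).1 (hpq ▸ dvd_mul_right p q)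
    have hpR3 : p ^ 3 ∣ (E + Q ^ 2) ^ 2 := by
      refine (pow_dvd_pow_of_dvd hpR 3).trans ?_
      rw [pow_right_comm]
      exact pow_dvd_pow_of_dvd hdvd 2
    convert hpR3.mul_left (C (4 * i ^ 2) ^ 2) using 1
    simp only [hp_def, hq_def, C_mul, C_pow, C_ofNat]
    ring
  have hq0 : q = 0 := eq_zero_of_cube_dvd_sq_sub_sq_add hq
    ((natDegree_C_mul_le _ E).trans_lt (hp.symm ▸ hE)) hcube
  rw [hq0, mul_zero] at hpq
  exact mul_ne_zero (C_ne_zero.2 hρ) (pow_ne_zero 2 hR0) hpq.symm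

end GeneralLemmas

/-- A point `(P : Q : R)` of the diagonal conic `αX² + βY² + γZ² = 0` over `K(t)`, given by coprime
polynomials that are not all constant. Pythagorean triples are the case `α = β = 1`, `γ = -1`;
arbitrary coefficients make the three coordinates interchangeable. By the conic equation it
suffices to ask that two of the coordinates be coprime and that one of them be nonconstant. -/
structure PrimitiveConicPoint {K : Type*} [Field K] (α β γ : K) (P Q R : K[X]) : Prop where
  coeff_ne_zero : α ≠ 0 ∧ β ≠ 0 ∧ γ ≠ 0
  conic_eq : C α * P ^ 2 + C β * Q ^ 2 + C γ * R ^ 2 = 0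
  isCoprime : IsCoprime P Q
  natDegree_pos : 0 < P.natDegree

namespace PrimitiveConicPoint

variable {K : Type*} [Field K] {α β γ a b c : K} {P Q R w E : K[X]}

lemma exists_sq_eq (h : PrimitiveConicPoint α β γ P Q R) :
    ∃ κ ρ : K, κ ≠ 0 ∧ ρ ≠ 0 ∧ P ^ 2 = C κ * Q ^ 2 + C ρ * R ^ 2 := by
  obtain ⟨hα, hβ, hγ⟩ := h.coeff_ne_zero
  refine ⟨-β / α, -γ / α, div_ne_zero (neg_ne_zero.2 hβ) hα,
    div_ne_zero (neg_ne_zero.2 hγ) hα, mul_left_cancel₀ (C_ne_zero.2 hα) ?_⟩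
  have hκ : C α * C (-β / α) = -C β := by rw [← C_mul, mul_div_cancel₀ _ hα, C_neg]
  have hρ : C α * C (-γ / α) = -C γ := by rw [← C_mul, mul_div_cancel₀ _ hα, C_neg]
  linear_combination h.conic_eq - Q ^ 2 * hκ - R ^ 2 * hρ

lemma natDegree_le_max (h : PrimitiveConicPoint α β γ P Q R) :
    P.natDegree ≤ max Q.natDegree R.natDegree := by
  obtain ⟨κ, ρ, hκ, hρ, hP⟩ := h.exists_sq_eq
  have hdeg := natDegree_add_le (C κ * Q ^ 2) (C ρ * R ^ 2)
  rw [← hP, natDegree_C_mul hκ, natDegree_C_mul hρ] at hdeg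
  simp only [natDegree_pow] at hdeg
  omega

lemma sum_ne_zero_of_natDegree_lt [NeZero (2 : K)]
    (h : PrimitiveConicPoint α β γ (w * E) Q R) (hw : 0 < w.natDegree) (hb : b ≠ 0)
    (hR : R.natDegree < (w * E).natDegree) {n k : ℕ} (hk : 3 ≤ k) :
    C a * E + C b * Q ^ 2 + C c * (w ^ n * R ^ k) ≠ 0 := by
  intro hsum
  obtain ⟨κ, ρ, -, hρ, hconic⟩ := h.exists_sq_eq
  have hwE0 : w * E ≠ 0 := ne_zero_of_natDegree_gt h.natDegree_pos
  have hE : (C (a / b) * E).natDegree < (w * E).natDegree := by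
    have := natDegree_C_mul_le (a / b) E
    rw [natDegree_mul (left_ne_zero_of_mul hwE0) (right_ne_zero_of_mul hwE0)]
    omega
  refine not_cube_dvd_add_sq hconic hρ hR hE ((dvd_C_mul hb).1 ((pow_dvd_pow R hk).trans ?_))
  have hab : C b * C (a / b) = C a := by rw [← C_mul, mul_div_cancel₀ _ hb]
  exact ⟨-(C c * w ^ n), by linear_combination hsum + E * hab⟩

variable [CharZero K]

lemma rotate (h : PrimitiveConicPoint α β γ P Q R) : PrimitiveConicPoint β γ α Q R P := by
  obtain ⟨hα, hβ, hγ⟩ := h.coeff_ne_zero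
  have hconic : C β * Q ^ 2 + C γ * R ^ 2 + C α * P ^ 2 = 0 := by
    linear_combination h.conic_eq
  have hQR : IsCoprime Q R := isCoprime_of_conic_eq hα h.conic_eq h.isCoprime
  have hRP : IsCoprime R P := isCoprime_of_conic_eq hβ hconic hQR
  refine ⟨⟨hβ, hγ, hα⟩, hconic, hQR, Nat.pos_of_ne_zero fun hQ ↦ h.natDegree_pos.ne' ?_⟩
  have hsum : C α * P ^ 2 + C γ * R ^ 2 = -(C β * Q ^ 2) := by linear_combination hconic
  refine derivative_eq_zero.1
    (derivative_eq_zero_of_derivative_sq_add_sq_eq_zero hα hγ hRP.symm ?_)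
  simp [hsum, derivative_of_natDegree_zero hQ, derivative_sq]

lemma swap_right (h : PrimitiveConicPoint α β γ P Q R) : PrimitiveConicPoint α γ β P R Q where
  coeff_ne_zero := ⟨h.coeff_ne_zero.1, h.coeff_ne_zero.2.2, h.coeff_ne_zero.2.1⟩
  conic_eq := by linear_combination h.conic_eq
  isCoprime := h.rotate.rotate.isCoprime.symm
  natDegree_pos := h.natDegree_pos

theorem sum_ne_zero_of_two_least_exponents (h : PrimitiveConicPoint α β γ P Q R)
    (hw : 0 < w.natDegree) (ha : a ≠ 0) {x n : ℕ} (hx : x ≠ 0) (hn : n ≠ 0) :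
    C a * P ^ x + C b * Q ^ x + C c * (w ^ n * R ^ (x + n)) ≠ 0 := by
  intro hsum
  obtain ⟨κ, ρ, hκ, hρ, hconic⟩ := h.exists_sq_eq
  have hQR := h.rotate.isCoprime
  have hR := h.rotate.rotate.natDegree_pos
  have hdvd : R ^ (x + n) * w ^ n ∣ C a * P ^ x + C b * Q ^ x :=
    ⟨-C c, by linear_combination hsum⟩
  by_cases hxn : 3 ≤ x + n
  · exact not_cube_dvd_pow_add_pow hconic hκ hρ hQR hR ha (Nat.cast_ne_zero.2 hx)
      ((pow_dvd_pow R hxn).trans (dvd_of_mul_right_dvd hdvd))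
  · obtain ⟨rfl, rfl⟩ : x = 1 ∧ n = 1 := by omega
    simp only [pow_one] at hdvd
    exact not_isUnit_of_natDegree_pos w hw
      (isUnit_of_sq_mul_dvd_add hconic hρ hQR hR ha hdvd)

lemma natDegree_lt_of_mul_eq_pow (h : PrimitiveConicPoint α β γ P Q R) (hw : w ≠ 0)
    (ha : a ≠ 0) (hb : b ≠ 0) (hc : c ≠ 0) {x y k m n : ℕ} (hm : m ≠ 0) (hy : y ≠ 0)
    (hE : P ^ x = w ^ m * E) (hsum : C a * E + C b * Q ^ y + C c * (w ^ n * R ^ k) = 0) :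
    y * Q.natDegree < P.natDegree + Q.natDegree + R.natDegree ∧
      n * w.natDegree + k * R.natDegree < P.natDegree + Q.natDegree + R.natDegree := by
  have hP := ne_zero_of_natDegree_gt h.natDegree_pos
  have hQ := ne_zero_of_natDegree_gt h.rotate.natDegree_pos
  have hR := ne_zero_of_natDegree_gt h.rotate.rotate.natDegree_pos
  have hEP : E ∣ P ^ x := Dvd.intro_left _ hE.symm
  have hwP : w ∣ P ^ x := (dvd_pow_self w hm).trans (Dvd.intro _ hE.symm)
  have hcop : IsCoprime (C a * E) (C b * Q ^ y) :=
    (isCoprime_mul_units_left (isUnit_C.2 ha.isUnit) (isUnit_C.2 hb.isUnit) _ _).2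
      (h.isCoprime.pow.of_isCoprime_of_dvd_left hEP)
  have hdvd : C a * E * (C b * Q ^ y) * (C c * (w ^ n * R ^ k)) ∣
      (P * Q * R) ^ (x + y + (x * n + k)) := by
    have hP_dvd : P ∣ P * Q * R := (dvd_mul_right P Q).mul_right R
    have hE_dvd := hEP.trans (pow_dvd_pow_of_dvd hP_dvd x)
    have hQ_dvd := pow_dvd_pow_of_dvd ((dvd_mul_left Q P).mul_right R) y
    have hw_dvd := pow_dvd_pow_of_dvd (hwP.trans (pow_dvd_pow_of_dvd hP_dvd x)) n
    have hR_dvd := pow_dvd_pow_of_dvd (dvd_mul_left R (P * Q)) k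
    rw [pow_add, pow_add, pow_add, pow_mul]
    exact mul_dvd_mul (mul_dvd_mul ((C_mul_dvd ha).2 hE_dvd) ((C_mul_dvd hb).2 hQ_dvd))
      ((C_mul_dvd hc).2 (mul_dvd_mul hw_dvd hR_dvd))
  have hQ_deg : (C b * Q ^ y).natDegree ≠ 0 := by
    rw [natDegree_C_mul hb, natDegree_pow]
    exact mul_ne_zero hy h.rotate.natDegree_pos.ne'
  have hlt := natDegree_lt_of_mul_mul_dvd_pow (mul_ne_zero (mul_ne_zero hP hQ) hR) hcop hsum
    hQ_deg hdvd
  simpa [natDegree_C_mul, hb, hc, natDegree_mul, hw, hP, hQ, hR] using hlt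

lemma sum_sq_ne_zero (h : PrimitiveConicPoint α β γ (w * E) Q R) (hw : 0 < w.natDegree)
    (ha : a ≠ 0) (hb : b ≠ 0) : C a * E + C b * Q ^ 2 + C c * R ^ 2 ≠ 0 := by
  intro hsum
  obtain ⟨hα, hβ, -⟩ := h.coeff_ne_zero
  have hE0 : E ≠ 0 := right_ne_zero_of_mul (ne_zero_of_natDegree_gt h.natDegree_pos)
  have hbα : b * α ≠ 0 := mul_ne_zero hb hα
  have hβa : β * a ≠ 0 := mul_ne_zero hβ ha
  set d := b * γ - β * c with hd
  have helim : C (b * α) * (w * E) ^ 2 + C d * R ^ 2 = C (β * a) * E := by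
    simp only [hd, C_mul, C_sub]
    linear_combination C b * h.conic_eq - C β * hsum
  by_cases hd0 : d = 0
  · have hw_dvd : w ∣ C (β * a) := by
      refine ⟨C (b * α) * w * E, mul_right_cancel₀ hE0 ?_⟩
      rw [hd0, C_0] at helim
      linear_combination -helim
    exact not_isUnit_of_natDegree_pos w hw
      (isUnit_of_dvd_unit hw_dvd (isUnit_C.2 hβa.isUnit))
  · have hcop : IsCoprime (w * E) R := h.rotate.rotate.isCoprime.symm
    have hE_dvd : E ∣ R ^ 2 := (dvd_C_mul hd0).1
      ⟨C (β * a) - C (b * α) * w ^ 2 * E, by linear_combination helim⟩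
    have hE_unit : IsUnit E := hcop.of_mul_left_right.pow_right.isUnit_of_dvd hE_dvd
    have hP' : derivative (w * E) = 0 := by
      refine derivative_eq_zero_of_derivative_sq_add_sq_eq_zero hbα hd0 hcop ?_
      rw [helim, derivative_C_mul,
        derivative_of_natDegree_zero (natDegree_eq_zero_of_isUnit hE_unit), mul_zero]
    exact h.natDegree_pos.ne' (derivative_eq_zero.1 hP')

theorem sum_ne_zero_of_unique_least_exponent (h : PrimitiveConicPoint α β γ P Q R)
    (hw : 0 < w.natDegree) (ha : a ≠ 0) (hb : b ≠ 0) (hc : c ≠ 0) {x m n : ℕ} (hx : x ≠ 0)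
    (hm : m ≠ 0) :
    C a * P ^ x + C b * (w ^ m * Q ^ (x + m)) + C c * (w ^ (m + n) * R ^ (x + m + n)) ≠ 0 := by
  intro hsum
  have hw0 := ne_zero_of_natDegree_gt hw
  obtain ⟨E, hE⟩ : w ^ m ∣ P ^ x := (dvd_C_mul ha).1
    ⟨-(C b * Q ^ (x + m) + C c * (w ^ n * R ^ (x + m + n))), by
      rw [pow_add w m n] at hsum
      linear_combination hsum⟩
  have hsum' : C a * E + C b * Q ^ (x + m) + C c * (w ^ n * R ^ (x + m + n)) = 0 := by
    apply mul_left_cancel₀ (pow_ne_zero m hw0)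
    rw [hE, pow_add w m n] at hsum
    linear_combination hsum
  obtain ⟨hQ_lt, hR_lt⟩ := h.natDegree_lt_of_mul_eq_pow hw0 ha hb hc hm (by omega) hE hsum'
  have hP_le := h.natDegree_le_max
  have hQ_le := h.rotate.natDegree_le_max
  obtain ⟨rfl, rfl⟩ : x = 1 ∧ m = 1 := by
    by_contra hxm
    have hQ3 := Nat.mul_le_mul_right Q.natDegree (by omega : 3 ≤ x + m)
    have hR3 := Nat.mul_le_mul_right R.natDegree (by omega : 3 ≤ x + m + n)
    omega
  obtain rfl : P = w * E := by simpa using hE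
  rcases Nat.eq_zero_or_pos n with rfl | hn
  · exact h.sum_sq_ne_zero hw ha hb (by simpa using hsum')
  · have hR3 := Nat.mul_le_mul_right R.natDegree (by omega : 3 ≤ 1 + 1 + n)
    exact h.sum_ne_zero_of_natDegree_lt hw hb (by omega) (by omega) hsum'

lemma exponents_eq_of_le_of_le (h : PrimitiveConicPoint α β γ P Q R) (hw : 0 < w.natDegree)
    (ha : a ≠ 0) (hb : b ≠ 0) (hc : c ≠ 0) {x y z : ℕ} (hx : 0 < x) (hxy : x ≤ y) (hyz : y ≤ z)
    (hsum : C a * (w * P) ^ x + C b * (w * Q) ^ y + C c * (w * R) ^ z = 0) :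
    x = y ∧ y = z := by
  obtain ⟨m, rfl⟩ := Nat.exists_eq_add_of_le hxy
  obtain ⟨n, rfl⟩ := Nat.exists_eq_add_of_le hyz
  have hcancel : C a * P ^ x + C b * (w ^ m * Q ^ (x + m)) +
      C c * (w ^ (m + n) * R ^ (x + m + n)) = 0 := by
    apply mul_left_cancel₀ (pow_ne_zero x (ne_zero_of_natDegree_gt hw))
    rw [mul_zero, ← hsum]
    ring
  obtain rfl : m = 0 := by
    by_contra hm
    exact h.sum_ne_zero_of_unique_least_exponent hw ha hb hc hx.ne' hm hcancel
  obtain rfl : n = 0 := by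
    by_contra hn
    exact h.sum_ne_zero_of_two_least_exponents hw ha hx.ne' hn (by simpa using hcancel)
  exact ⟨rfl, rfl⟩

lemma exponents_eq_of_le (h : PrimitiveConicPoint α β γ P Q R) (hw : 0 < w.natDegree)
    (ha : a ≠ 0) (hb : b ≠ 0) (hc : c ≠ 0) {x y z : ℕ} (hx : 0 < x) (hxy : x ≤ y) (hxz : x ≤ z)
    (hsum : C a * (w * P) ^ x + C b * (w * Q) ^ y + C c * (w * R) ^ z = 0) :
    x = y ∧ y = z := by
  rcases le_total y z with hyz | hzy
  · exact h.exponents_eq_of_le_of_le hw ha hb hc hx hxy hyz hsum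
  · obtain ⟨rfl, rfl⟩ := h.swap_right.exponents_eq_of_le_of_le hw ha hc hb hx hxz hzy
      (by linear_combination hsum)
    exact ⟨rfl, rfl⟩

theorem exponents_eq (h : PrimitiveConicPoint α β γ P Q R) (hw : 0 < w.natDegree)
    (ha : a ≠ 0) (hb : b ≠ 0) (hc : c ≠ 0) {x y z : ℕ} (hx : 0 < x) (hy : 0 < y) (hz : 0 < z)
    (hsum : C a * (w * P) ^ x + C b * (w * Q) ^ y + C c * (w * R) ^ z = 0) :
    x = y ∧ y = z := by
  obtain ⟨hxy, hxz⟩ | ⟨hyz, hyx⟩ | ⟨hzx, hzy⟩ :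
      (x ≤ y ∧ x ≤ z) ∨ (y ≤ z ∧ y ≤ x) ∨ (z ≤ x ∧ z ≤ y) := by omega
  · exact h.exponents_eq_of_le hw ha hb hc hx hxy hxz hsum
  · obtain ⟨rfl, rfl⟩ := h.rotate.exponents_eq_of_le hw hb hc ha hy hyz hyx
      (by linear_combination hsum)
    exact ⟨rfl, rfl⟩
  · obtain ⟨rfl, rfl⟩ := h.rotate.rotate.exponents_eq_of_le hw hc ha hb hz hzx hzy
      (by linear_combination hsum)
    exact ⟨rfl, rfl⟩

end PrimitiveConicPoint

lemma primitiveConicPoint_of_isCoprime {K : Type*} [Field K] [NeZero (2 : K)] {f g : K[X]}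
    (hfg : IsCoprime f g) (hdeg : 0 < (f * g).natDegree) :
    PrimitiveConicPoint 1 1 (-1) (2 * f * g) (f ^ 2 - g ^ 2) (f ^ 2 + g ^ 2) where
  coeff_ne_zero := by simp
  conic_eq := by
    simp only [C_neg, C_1]
    ring
  isCoprime := by
    have hf : IsCoprime f (f ^ 2 - g ^ 2) := by
      rw [show f ^ 2 - g ^ 2 = -g ^ 2 + f * f by ring]
      exact hfg.pow_right.neg_right.add_mul_left_right f
    have hg : IsCoprime g (f ^ 2 - g ^ 2) := by
      rw [show f ^ 2 - g ^ 2 = f ^ 2 + g * -g by ring]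
      exact hfg.symm.pow_right.add_mul_left_right (-g)
    rw [mul_assoc, ← C_ofNat, isCoprime_mul_unit_left_left (isUnit_C.2 two_ne_zero.isUnit)]
    exact hf.mul_left hg
  natDegree_pos := by rwa [mul_assoc, ← C_ofNat, natDegree_C_mul two_ne_zero]

theorem jesmanowicz_poly_exponents_equal_general {K : Type*} [Field K] [CharZero K]
    (f g w : K[X]) (hdeg : 0 < (f * g).natDegree) (hfg : IsCoprime f g) (hw : 0 < w.natDegree)
    (x y z : ℕ) (hx : 0 < x) (hy : 0 < y) (hz : 0 < z)
    (heq : (w * (f ^ 2 - g ^ 2)) ^ x + (w * (2 * f * g)) ^ y = (w * (f ^ 2 + g ^ 2)) ^ z) :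
    x = y ∧ y = z := by
  have hsum : C 1 * (w * (2 * f * g)) ^ y + C 1 * (w * (f ^ 2 - g ^ 2)) ^ x +
      C (-1) * (w * (f ^ 2 + g ^ 2)) ^ z = 0 := by
    simp only [C_neg, C_1]
    linear_combination heq
  obtain ⟨rfl, rfl⟩ := (primitiveConicPoint_of_isCoprime hfg hdeg).exponents_eq hw one_ne_zero
    one_ne_zero (neg_ne_zero.2 one_ne_zero) hy hx hz hsum
  exact ⟨rfl, rfl⟩

theorem jesmanowicz_poly_exponents_equal
    {K : Type*} [Field K] [CharZero K] [IsAlgClosed K]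
    (f g w : K[X])
    (hf : 0 < f.natDegree) (hg : 0 < g.natDegree)
    (hfg : IsCoprime f g) (hw : 0 < w.natDegree)
    (x y z : ℕ) (hx : 0 < x) (hy : 0 < y) (hz : 0 < z)
    (heq : (w * (f ^ 2 - g ^ 2)) ^ x + (w * (2 * f * g)) ^ y = (w * (f ^ 2 + g ^ 2)) ^ z) :
    x = y ∧ y = z := by
  have hdeg : 0 < (f * g).natDegree := by
    rw [natDegree_mul (ne_zero_of_natDegree_gt hf) (ne_zero_of_natDegree_gt hg)]
    exact Nat.add_pos_left hf _
  exact jesmanowicz_poly_exponents_equal_general f g w hdeg hfg hw x y z hx hy hz heq
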